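/- Let k ≥ 2 be a positive integer and let T be any fixed tree on k vertices. For every large enough integer n with k dividing n, in the unbiased Waiter-Client game on the edge set of K_n whose winning sets are the T-factors of K_n, we have ((k−1)/k)·n ≤ τ_WC(F_{n,T-fac}, 1) ≤ ((k−1)/k)·n + 1. -/

import Mathlib

open Finset

/-- `WaiterWins board b win t Cl W` means: starting from the position where Client owns the
elements of `Cl` and Waiter owns the elements of `W`, Waiter can force that within the next `t`
rounds of the `b`-biased Waiter-Client game on the board `board` a position is reached in which
the predicate `win` holds of (Client's elements, Waiter's elements).  In each round Waiter offers
`b+1` previously unclaimed board elements (or all remaining unclaimed elements, if fewer than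
`b+1` remain); Client claims exactly one of them, the rest go to Waiter. -/
def WaiterWins {X : Type*} [DecidableEq X] (board : Finset X) (b : ℕ)
    (win : Finset X → Finset X → Prop) :
    ℕ → Finset X → Finset X → Prop
  | 0, Cl, W => win Cl W
  | (t+1), Cl, W => win Cl W ∨
      ∃ O : Finset X, O.Nonempty ∧ O ⊆ board \ (Cl ∪ W) ∧
        O.card = min (b + 1) ((board \ (Cl ∪ W)).card) ∧
        ∀ x ∈ O, WaiterWins board b win t (insert x Cl) (W ∪ O.erase x)

/-- `tauWC board F b` : the smallest number of rounds within which Waiter can force Client's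
elements to contain some member of the winning family `F`, in the `b`-biased Waiter-Client game
on the board `board`. -/
noncomputable def tauWC {X : Type*} [DecidableEq X] (board : Finset X)
    (F : Set (Finset X)) (b : ℕ) : ℕ :=
  sInf {t | WaiterWins board b (fun Cl _ => ∃ A ∈ F, A ⊆ Cl) t ∅ ∅}

/-- The edge set of the complete graph on `Fin n`. -/
def Kedges (n : ℕ) : Finset (Sym2 (Fin n)) :=
  Finset.univ.filter (fun e => ¬ e.IsDiag)

/-- The family of edge sets of `H`-factors of `K_n`, where `H` is the graph on `Fin k` with
edge set `E`: vertex-disjoint unions of copies of `H` covering all `n` vertices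
(each of the `n/k` copies is given by an embedding `g i`, and the copies partition `Fin n`). -/
def factorFamily (k n : ℕ) (E : Set (Sym2 (Fin k))) : Set (Finset (Sym2 (Fin n))) :=
  {F | ∃ g : Fin (n / k) → Fin k → Fin n,
    (∀ v : Fin n, ∃! p : Fin (n / k) × Fin k, g p.1 p.2 = v) ∧
    (F : Set (Sym2 (Fin n))) = ⋃ i : Fin (n / k), Sym2.map (g i) '' E}

section helpers
open Classical in
lemma tree_order (N : ℕ) : ∀ (V : Type) [Fintype V] (G : SimpleGraph V), G.IsTree →
    Fintype.card V = N + 1 →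
    ∃ (f : ℕ → V) (par : ℕ → ℕ), (∀ v, ∃ c < N + 1, f c = v) ∧
      (∀ c c', c < N + 1 → c' < N + 1 → f c = f c' → c = c') ∧
      (∀ c, 1 ≤ c → c < N + 1 → par c < c) ∧
      (∀ u v, G.Adj u v → ∃ c, 1 ≤ c ∧ c < N + 1 ∧ s(u, v) = s(f c, f (par c))) := by
  induction N with
  | zero =>
    intro V _ G hG hc
    obtain ⟨x, hx⟩ := Fintype.card_eq_one_iff.1 hc
    refine ⟨fun _ => x, fun _ => 0, fun v => ⟨0, by simp, (hx v).symm⟩, ?_, ?_, ?_⟩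
    · intros; omega
    · intros; omega
    · intro u v h; exact absurd h (by rw [hx u, hx v]; exact G.loopless.irrefl x)
  | succ N ih =>
    intro V _ G hG hc
    have : Nontrivial V := Fintype.one_lt_card_iff_nontrivial.1 (by omega)
    obtain ⟨v, hv⟩ := hG.exists_vert_degree_one_of_nontrivial
    have ht : (G.induce {v}ᶜ).IsTree :=
      ⟨hG.1.induce_compl_singleton_of_degree_eq_one hv, hG.2.induce _⟩
    have hcard : Fintype.card ({v}ᶜ : Set V) = N + 1 := by
      have := Fintype.card_compl_set ({v} : Set V)
      simp at this
      simp
      omega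
    obtain ⟨f, par, h1, h2, h3, h4⟩ := ih _ _ ht hcard
    obtain ⟨w, hw, hwu⟩ := (SimpleGraph.degree_eq_one_iff_existsUnique_adj).1 hv
    have hwv : w ≠ v := hw.ne'
    obtain ⟨cw, hcw, hfw⟩ := h1 ⟨w, by simpa using hwv⟩
    have hval : ∀ c, (f c : V) ≠ v := fun c => (f c).2
    refine ⟨fun c => if c = N + 1 then v else f c, fun c => if c = N + 1 then cw else par c,
      ?_, ?_, ?_, ?_⟩
    · intro x
      by_cases hx : x = v
      · exact ⟨N + 1, by omega, by simp [hx]⟩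
      · obtain ⟨c, hc, hfc⟩ := h1 ⟨x, by simpa using hx⟩
        refine ⟨c, by omega, ?_⟩
        have : c ≠ N + 1 := by omega
        simp [this, hfc]
    · intro c c' hc hc' h
      by_cases e : c = N + 1 <;> by_cases e' : c' = N + 1
      · omega
      · simp [e, e'] at h; exact absurd h.symm (hval c')
      · simp [e, e'] at h; exact absurd h (hval c)
      · simp [e, e'] at h
        exact h2 c c' (by omega) (by omega) (Subtype.ext h)
    · intro c hc hc'
      by_cases e : c = N + 1
      · simp [e]; omega
      · simp [e]; exact h3 c hc (by omega)
    · have key : ∀ x, G.Adj v x → ∃ c, 1 ≤ c ∧ c < N + 1 + 1 ∧ s(v, x) =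
          s((if c = N + 1 then v else f c : V), if (if c = N + 1 then cw else par c) = N + 1
            then v else (f (if c = N + 1 then cw else par c) : V)) := by
        intro x hx
        refine ⟨N + 1, by omega, by omega, ?_⟩
        have : cw ≠ N + 1 := by omega
        simp [this, hfw, hwu x hx]
      intro x y hxy
      by_cases hx : x = v
      · subst hx; exact key y hxy
      by_cases hy : y = v
      · subst hy
        obtain ⟨c, a, b, e⟩ := key x hxy.symm
        exact ⟨c, a, b, by rw [Sym2.eq_swap]; exact e⟩
      obtain ⟨c, hc1, hc2, e⟩ := h4 ⟨x, by simpa using hx⟩ ⟨y, by simpa using hy⟩ hxy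
      refine ⟨c, hc1, by omega, ?_⟩
      have e1 : c ≠ N + 1 := by omega
      have e2 : par c ≠ N + 1 := by have := h3 c hc1 hc2; omega
      simp only [e1, e2, if_false]
      have := congrArg (Sym2.map Subtype.val) e
      simpa using this

lemma offer {X : Type*} [DecidableEq X] {board : Finset X} {win : Finset X → Finset X → Prop}
    {t : ℕ} {Cl W : Finset X} (e f : X) (he : e ∈ board) (hf : f ∈ board)
    (heU : e ∉ Cl ∪ W) (hfU : f ∉ Cl ∪ W) (hne : e ≠ f)
    (H1 : ∀ Cl' W', insert e Cl ⊆ Cl' → (∀ z ∈ Cl' ∪ W', z = e ∨ z = f ∨ z ∈ Cl ∪ W) →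
      WaiterWins board 1 win t Cl' W')
    (H2 : ∀ Cl' W', insert f Cl ⊆ Cl' → (∀ z ∈ Cl' ∪ W', z = e ∨ z = f ∨ z ∈ Cl ∪ W) →
      WaiterWins board 1 win t Cl' W') :
    WaiterWins board 1 win (t + 1) Cl W := by
  right
  have hsub : ({e, f} : Finset X) ⊆ board \ (Cl ∪ W) := by
    intro z hz
    simp only [Finset.mem_insert, Finset.mem_singleton] at hz
    rcases hz with rfl | rfl
    · exact Finset.mem_sdiff.2 ⟨he, heU⟩
    · exact Finset.mem_sdiff.2 ⟨hf, hfU⟩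
  have hc : ({e, f} : Finset X).card = 2 := Finset.card_pair hne
  refine ⟨{e, f}, ⟨e, by simp⟩, hsub, ?_, ?_⟩
  · have := Finset.card_le_card hsub
    omega
  · intro x hx
    simp only [Finset.mem_insert, Finset.mem_singleton] at hx
    rcases hx with rfl | rfl
    · apply H1 _ _ (Finset.Subset.refl _)
      intro z hz
      simp only [Finset.mem_union, Finset.mem_insert, Finset.mem_erase, Finset.mem_singleton] at *
      tauto
    · apply H2 _ _ (Finset.Subset.refl _)
      intro z hz
      simp only [Finset.mem_union, Finset.mem_insert, Finset.mem_erase, Finset.mem_singleton] at *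
      tauto

lemma wins_card {X : Type*} [DecidableEq X] {board : Finset X} {b : ℕ} {F : Set (Finset X)}
    (t : ℕ) : ∀ (Cl W : Finset X),
    WaiterWins board b (fun Cl _ => ∃ A ∈ F, A ⊆ Cl) t Cl W →
    ∃ A ∈ F, A.card ≤ Cl.card + t := by
  induction t with
  | zero =>
    rintro Cl W ⟨A, hA, h⟩
    exact ⟨A, hA, by simpa using Finset.card_le_card h⟩
  | succ t ih =>
    rintro Cl W (⟨A, hA, h⟩ | ⟨O, ⟨x, hx⟩, -, -, h⟩)
    · exact ⟨A, hA, (Finset.card_le_card h).trans (by omega)⟩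
    · obtain ⟨A, hA, h'⟩ := ih _ _ (h x hx)
      exact ⟨A, hA, h'.trans (by have := Finset.card_insert_le x Cl; omega)⟩

variable {n : ℕ}

lemma mem_K {u v : Fin n} : s(u, v) ∈ Kedges n ↔ u ≠ v := by
  simp [Kedges]

def MCont (win : Finset (Sym2 (Fin n)) → Finset (Sym2 (Fin n)) → Prop) (t : ℕ)
    (Inv : Finset (Fin n) → Finset (Sym2 (Fin n)) → Prop)
    (X F : Finset (Fin n)) (Cl : Finset (Sym2 (Fin n))) : Prop :=
  ∀ Cl' W' (f : Fin n → Fin n), Cl ⊆ Cl' → Set.InjOn f X → (∀ x ∈ X, f x ∈ F) →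
    (∀ x ∈ X, s(x, f x) ∈ Cl') → Inv (F \ X.image f) (Cl' ∪ W') →
    WaiterWins (Kedges n) 1 win t Cl' W'

lemma MCont.mono {win t Inv} {X F : Finset (Fin n)} {Cl Cl1}
    (h : MCont win t Inv X F Cl) (hs : Cl ⊆ Cl1) : MCont win t Inv X F Cl1 :=
  fun Cl' W' f h1 => h Cl' W' f (hs.trans h1)

lemma MCont.peel {win t Inv} {X F : Finset (Fin n)} {Cl Cl1}
    (h : MCont win t Inv X F Cl) (hs : Cl ⊆ Cl1) {x a : Fin n} (hx : x ∈ X) (ha : a ∈ F)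
    (hxa : s(x, a) ∈ Cl1) : MCont win t Inv (X.erase x) (F.erase a) Cl1 := by
  intro Cl' W' f h1 h2 h3 h4 h5
  have hne : ∀ y ∈ X, y ≠ x → f y ≠ a ∧ f y ∈ F := fun y hy hyx => by
    simpa using h3 y (Finset.mem_erase.2 ⟨hyx, hy⟩)
  apply h Cl' W' (Function.update f x a) (hs.trans h1)
  · intro y hy z hz hyz
    by_cases e : y = x <;> by_cases e' : z = x
    · rw [e, e']
    · subst e; simp [e'] at hyz; exact absurd hyz.symm (hne z hz e').1
    · subst e'; simp [e] at hyz; exact absurd hyz (hne y hy e).1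
    · simp [e, e'] at hyz
      exact h2 (by simpa [e] using hy) (by simpa [e'] using hz) hyz
  · intro y hy
    by_cases e : y = x
    · simpa [e] using ha
    · simpa [e] using (hne y hy e).2
  · intro y hy
    by_cases e : y = x
    · subst e; simpa using h1 hxa
    · simpa [e] using h4 y (Finset.mem_erase.2 ⟨e, hy⟩)
  · convert h5 using 1
    ext v
    simp only [Finset.mem_sdiff, Finset.mem_image, Finset.mem_erase]
    constructor
    · rintro ⟨hv, hh⟩
      refine ⟨⟨?_, hv⟩, ?_⟩
      · rintro rfl; exact hh ⟨x, hx, by simp⟩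
      · rintro ⟨y, ⟨hy1, hy2⟩, rfl⟩; exact hh ⟨y, hy2, by simp [hy1]⟩
    · rintro ⟨⟨hv1, hv⟩, hh⟩
      refine ⟨hv, ?_⟩
      rintro ⟨y, hy, rfl⟩
      by_cases e : y = x
      · subst e; simp at hv1
      · exact hh ⟨y, ⟨e, hy⟩, by simp [e]⟩

def Clean (F : Finset (Fin n)) (U : Finset (Sym2 (Fin n))) : Prop :=
  ∀ e ∈ U, ∀ v ∈ F, v ∉ e

def Hot (F : Finset (Fin n)) (U : Finset (Sym2 (Fin n))) : Prop :=
  ∃ h ∈ F, ∃ u ∉ F, ∀ e ∈ U, ∀ v ∈ F, v ∈ e → e = s(u, h)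

/-- One clean step -/
lemma clean_step {win t Inv s} {X F : Finset (Fin n)} {Cl W}
    (hd : Disjoint X F) {x x' a : Fin n} (hx : x ∈ X) (hx' : x' ∈ X) (hxx : x ≠ x') (ha : a ∈ F)
    (hc : Clean (F.erase a) (Cl ∪ W)) (h1 : s(x, a) ∉ Cl ∪ W) (h2 : s(x', a) ∉ Cl ∪ W)
    (hC : MCont win t Inv X F Cl)
    (H : ∀ y ∈ X, ∀ Cl' W', Clean (F.erase a) (Cl' ∪ W') →
      MCont win t Inv (X.erase y) (F.erase a) Cl' → WaiterWins (Kedges n) 1 win s Cl' W') :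
    WaiterWins (Kedges n) 1 win (s + 1) Cl W := by
  have hXF : ∀ y ∈ X, y ∉ F := fun y hy hy' => Finset.disjoint_left.1 hd hy hy'
  have key : ∀ Cl' W', (∀ z ∈ Cl' ∪ W', z = s(x, a) ∨ z = s(x', a) ∨ z ∈ Cl ∪ W) →
      Clean (F.erase a) (Cl' ∪ W') := by
    intro Cl' W' h e he v hv
    rw [Finset.mem_erase] at hv
    rcases h e he with rfl | rfl | h
    · simp only [Sym2.mem_iff]; rintro (rfl | rfl)
      · exact hXF _ hx hv.2
      · exact hv.1 rfl
    · simp only [Sym2.mem_iff]; rintro (rfl | rfl)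
      · exact hXF _ hx' hv.2
      · exact hv.1 rfl
    · exact hc e h v (by simpa using hv)
  have nxa : ∀ y ∈ X, y ≠ a := fun y hy h => hXF y hy (h ▸ ha)
  apply offer s(x, a) s(x', a) (mem_K.2 (nxa x hx)) (mem_K.2 (nxa x' hx')) h1 h2
  · simp [hxx, nxa x hx]
  · intro Cl' W' hs hz
    exact H x hx Cl' W' (key _ _ hz)
      (hC.peel ((Finset.subset_insert _ _).trans hs) hx ha (hs (by simp)))
  · intro Cl' W' hs hz
    exact H x' hx' Cl' W' (key _ _ hz)
      (hC.peel ((Finset.subset_insert _ _).trans hs) hx' ha (hs (by simp)))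

lemma Clean.erase {F : Finset (Fin n)} {U} (h : Clean F U) (a : Fin n) : Clean (F.erase a) U :=
  fun e he v hv => h e he v (Finset.mem_of_mem_erase hv)

lemma clean_run {win t Inv s} (r : ℕ) (q p : ℕ) (hr0 : 1 ≤ r) (hp0 : 1 ≤ p)
    (Hend : ∀ (X F : Finset (Fin n)) Cl W, Disjoint X F → X.card = r → F.card = p →
      Clean F (Cl ∪ W) → MCont win t Inv X F Cl → WaiterWins (Kedges n) 1 win s Cl W) :
    ∀ (X F : Finset (Fin n)) Cl W, Disjoint X F → X.card = r + q → F.card = p + q →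
      Clean F (Cl ∪ W) → MCont win t Inv X F Cl → WaiterWins (Kedges n) 1 win (s + q) Cl W := by
  induction q with
  | zero => exact Hend
  | succ q ih =>
    intro X F Cl W hd hX hF hc hC
    obtain ⟨x, hx, x', hx', hxx⟩ := Finset.one_lt_card.1 (show 1 < X.card by omega)
    obtain ⟨a, ha⟩ := Finset.card_pos.1 (show 0 < F.card by omega)
    apply clean_step hd hx hx' hxx ha (hc.erase a)
      (fun h => hc _ h a ha (by simp)) (fun h => hc _ h a ha (by simp)) hC
    intro y hy Cl' W' h1 h2
    exact ih _ _ _ _ (hd.mono (Finset.erase_subset _ _) (Finset.erase_subset _ _))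
      (by rw [Finset.card_erase_of_mem hy]; omega) (by rw [Finset.card_erase_of_mem ha]; omega)
      h1 h2

/-- A run starting from a hot position. -/
lemma hot_run {win t Inv s} (r : ℕ) (q p : ℕ) (hr0 : 1 ≤ r) (hp0 : 1 ≤ p) (hq : 2 ≤ q)
    (Hend : ∀ (X F : Finset (Fin n)) Cl W, Disjoint X F → X.card = r → F.card = p →
      Clean F (Cl ∪ W) → MCont win t Inv X F Cl → WaiterWins (Kedges n) 1 win s Cl W) :
    ∀ (X F : Finset (Fin n)) Cl W, Disjoint X F → X.card = r + q → F.card = p + q →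
      Hot F (Cl ∪ W) → MCont win t Inv X F Cl → WaiterWins (Kedges n) 1 win (s + q) Cl W := by
  obtain ⟨q, rfl⟩ : ∃ q', q = q' + 1 := ⟨q - 1, by omega⟩
  intro X F Cl W hd hX hF hc hC
  obtain ⟨h, hh, u, hu, hhot⟩ := hc
  obtain ⟨x, hx, x', hx', hxx⟩ := Finset.one_lt_card.1
    (show 1 < (X.erase u).card by have := Finset.pred_card_le_card_erase (s := X) (a := u); omega)
  rw [Finset.mem_erase] at hx hx'
  have huh : u ≠ h := fun e => hu (e ▸ hh)
  apply clean_step hd hx.2 hx'.2 hxx hh ?_ ?_ ?_ hC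
  · intro y hy Cl' W' h1 h2
    exact clean_run r q p hr0 hp0 Hend _ _ _ _
      (hd.mono (Finset.erase_subset _ _) (Finset.erase_subset _ _))
      (by rw [Finset.card_erase_of_mem hy]; omega) (by rw [Finset.card_erase_of_mem hh]; omega)
      h1 h2
  · intro e he v hv hve
    rw [Finset.mem_erase] at hv
    have := hhot e he v hv.2 hve
    rw [this, Sym2.mem_iff] at hve
    rcases hve with rfl | rfl
    · exact hu hv.2
    · exact hv.1 rfl
  · intro hm
    have := hhot _ hm h hh (by simp)
    simp at this
    tauto
  · intro hm
    have := hhot _ hm h hh (by simp)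
    simp at this
    tauto

lemma stage {win t} (X F : Finset (Fin n)) (Cl W) (hd : Disjoint X F) (hX : 3 ≤ X.card)
    (hF : X.card < F.card) (hh : Hot F (Cl ∪ W)) (hC : MCont win t Hot X F Cl) :
    WaiterWins (Kedges n) 1 win (t + X.card) Cl W := by
  have := hot_run (win := win) (t := t) (Inv := Hot) (s := t + 1) 1 (X.card - 1)
    (F.card - X.card + 1) le_rfl (by omega) (by omega) ?_ X F Cl W hd (by omega) (by omega) hh hC
  · convert this using 1; omega
  intro X F' Cl W hd hX1 hF1 hc hC
  obtain ⟨x, rfl⟩ := Finset.card_eq_one.1 hX1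
  obtain ⟨a, ha, b, hb, hab⟩ := Finset.one_lt_card.1 (show 1 < F'.card by omega)
  have hxF : x ∉ F' := fun h => Finset.disjoint_left.1 hd (by simp) h
  have hxa : x ≠ a := fun h => hxF (h ▸ ha)
  have hxb : x ≠ b := fun h => hxF (h ▸ hb)
  have key : ∀ c d, c ∈ F' → d ∈ F' → c ≠ d → ∀ Cl' W', insert s(x, c) Cl ⊆ Cl' →
      (∀ z ∈ Cl' ∪ W', z = s(x, c) ∨ z = s(x, d) ∨ z ∈ Cl ∪ W) →
      WaiterWins (Kedges n) 1 win t Cl' W' := by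
    intro c d hc' hd' hcd Cl' W' hs hz
    apply hC Cl' W' (fun _ => c) ((Finset.subset_insert _ _).trans hs)
    · simp
    · simpa using hc'
    · simpa using hs (by simp)
    · refine ⟨d, by simp [hd', hcd.symm], x, by simp [hxF], ?_⟩
      intro e he v hv hve
      simp at hv
      rcases hz e he with rfl | rfl | h
      · simp at hve
        rcases hve with rfl | rfl
        · exact absurd hv.1 hxF
        · exact absurd rfl hv.2
      · rfl
      · exact absurd hve (hc e h v hv.1)
  apply offer s(x, a) s(x, b) (mem_K.2 hxa) (mem_K.2 hxb)
    (fun h => hc _ h a ha (by simp)) (fun h => hc _ h b hb (by simp))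
  · simp [hab, hxb]
  · exact key a b ha hb hab
  · intro Cl' W' h1 h2
    exact key b a hb ha hab.symm Cl' W' h1 (fun z hz => by have := h2 z hz; tauto)

lemma sne {y b y' b' : Fin n} (h1 : y ≠ b') (h : y ≠ y' ∨ b ≠ b') : s(y, b) ≠ s(y', b') := by
  intro e
  rcases Sym2.eq_iff.1 e with ⟨p, q⟩ | ⟨p, q⟩
  · rcases h with h | h
    · exact h p
    · exact h q
  · exact h1 p

lemma triv3 {p q r : Prop} (h : p ∨ q ∨ r) (h1 : ¬ p) (h2 : ¬ q) (h3 : ¬ r) : False := by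
  tauto

/-- Final assignment in the endgame. -/
lemma end_assign {win} {X F : Finset (Fin n)} {Cl0 Cl W}
    {y1 y2 y3 y4 b1 b2 b3 b4 : Fin n}
    (hC : MCont win 0 (fun _ _ => True) X F Cl0) (hs : Cl0 ⊆ Cl)
    (hX : X = {y1, y2, y3, y4}) (hF : F = {b1, b2, b3, b4})
    (hy : [y1, y2, y3, y4].Nodup) (hb : [b1, b2, b3, b4].Nodup)
    (h1 : s(y1, b1) ∈ Cl) (h2 : s(y2, b2) ∈ Cl) (h3 : s(y3, b3) ∈ Cl) (h4 : s(y4, b4) ∈ Cl) :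
    WaiterWins (Kedges n) 1 win 0 Cl W := by
  subst hX hF
  simp only [List.nodup_cons, List.mem_cons, List.not_mem_nil, or_false, not_or] at hy hb
  have p1 := hC.peel hs (x := y1) (a := b1) (by simp) (by simp) h1
  have p2 := p1.peel (Finset.Subset.refl _) (x := y2) (a := b2)
    (by simp; tauto) (by simp; tauto) h2
  have p3 := p2.peel (Finset.Subset.refl _) (x := y3) (a := b3)
    (by simp; tauto) (by simp; tauto) h3
  have p4 := p3.peel (Finset.Subset.refl _) (x := y4) (a := b4)
    (by simp; tauto) (by simp; tauto) h4
  have hem : ((((({y1, y2, y3, y4} : Finset (Fin n)).erase y1).erase y2).erase y3).erase y4) = ∅ := by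
    ext v; simp; tauto
  rw [hem] at p4
  exact p4 Cl W id (Finset.Subset.refl _) (by simp) (by simp) (by simp) trivial

/-- last round -/
lemma end5 {win} {X F : Finset (Fin n)} {Cl0 Cl W}
    {y1 y2 y3 y4 b1 b2 b3 b4 : Fin n} (hd : Disjoint X F)
    (hC : MCont win 0 (fun _ _ => True) X F Cl0) (hs : Cl0 ⊆ Cl)
    (hX : X = {y1, y2, y3, y4}) (hF : F = {b1, b2, b3, b4})
    (hy : [y1, y2, y3, y4].Nodup) (hb : [b1, b2, b3, b4].Nodup)
    (h1 : s(y1, b1) ∈ Cl) (h2 : s(y2, b2) ∈ Cl) (h3 : s(y3, b3) ∈ Cl) (h4 : s(y1, b4) ∈ Cl)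
    (f1 : s(y4, b1) ∉ Cl ∪ W) (f2 : s(y4, b4) ∉ Cl ∪ W) :
    WaiterWins (Kedges n) 1 win 1 Cl W := by
  have hne : ∀ x ∈ X, ∀ a ∈ F, x ≠ a := fun x hx a ha e => Finset.disjoint_left.1 hd hx (e ▸ ha)
  have n1 : y4 ≠ b1 := hne _ (by simp [hX]) _ (by simp [hF])
  have n4 : y4 ≠ b4 := hne _ (by simp [hX]) _ (by simp [hF])
  have hb' := hb
  simp only [List.nodup_cons, List.mem_cons, List.not_mem_nil, or_false, not_or] at hb'
  apply offer s(y4, b1) s(y4, b4) (mem_K.2 n1) (mem_K.2 n4) f1 f2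
  · simp; tauto
  · intro Cl' W' hs' _
    have hs2 := (Finset.subset_insert _ _).trans hs'
    refine end_assign (y1 := y1) (y2 := y2) (y3 := y3) (y4 := y4) (b1 := b4) (b2 := b2) (b3 := b3)
      (b4 := b1) hC (hs.trans hs2) hX ?_ hy ?_ (hs2 h4) (hs2 h2) (hs2 h3) (hs' (by simp))
    · rw [hF]; ext v; simp; tauto
    · simp; tauto
  · intro Cl' W' hs' _
    have hs2 := (Finset.subset_insert _ _).trans hs'
    exact end_assign hC (hs.trans hs2) hX hF hy hb (hs2 h1) (hs2 h2) (hs2 h3) (hs' (by simp))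

lemma end4 {win} {X F : Finset (Fin n)} {Cl0 Cl W}
    {y1 y2 y3 y4 b1 b2 b3 b4 : Fin n} (hd : Disjoint X F)
    (hC : MCont win 0 (fun _ _ => True) X F Cl0) (hs : Cl0 ⊆ Cl)
    (hX : X = {y1, y2, y3, y4}) (hF : F = {b1, b2, b3, b4})
    (hy : [y1, y2, y3, y4].Nodup) (hb : [b1, b2, b3, b4].Nodup)
    (h1 : s(y1, b1) ∈ Cl) (h2 : s(y2, b2) ∈ Cl) (h3 : s(y3, b3) ∈ Cl)
    (f1 : s(y4, b1) ∉ Cl ∪ W) (f2 : s(y4, b2) ∉ Cl ∪ W)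
    (f3 : ∀ y ∈ X, s(y, b4) ∉ Cl ∪ W) :
    WaiterWins (Kedges n) 1 win 2 Cl W := by
  have hne : ∀ x ∈ X, ∀ a ∈ F, x ≠ a := fun x hx a ha e => Finset.disjoint_left.1 hd hx (e ▸ ha)
  have m1 : y1 ∈ X := by simp [hX]
  have m2 : y2 ∈ X := by simp [hX]
  have m4 : y4 ∈ X := by simp [hX]
  have c1 : b1 ∈ F := by simp [hF]
  have c2 : b2 ∈ F := by simp [hF]
  have c4 : b4 ∈ F := by simp [hF]
  have n1 := hne _ m1 _ c4
  have n2 := hne _ m2 _ c4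
  have n4 := hne _ m4 _ c4
  have hb' := hb
  have hy' := hy
  simp only [List.nodup_cons, List.mem_cons, List.not_mem_nil, or_false, not_or] at hb' hy'
  apply offer s(y1, b4) s(y2, b4) (mem_K.2 n1) (mem_K.2 n2) (f3 _ m1) (f3 _ m2)
  · simp; tauto
  · intro Cl' W' hs' hz
    have hs2 := (Finset.subset_insert _ _).trans hs'
    refine end5 hd hC (hs.trans hs2) hX hF hy hb (hs2 h1) (hs2 h2) (hs2 h3) (hs' (by simp)) ?_ ?_
    · intro h
      exact triv3 (hz _ h) (sne n4 (Or.inl (Ne.symm hy'.1.2.2)))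
        (sne n4 (Or.inl (Ne.symm hy'.2.1.2))) f1
    · intro h
      exact triv3 (hz _ h) (sne n4 (Or.inl (Ne.symm hy'.1.2.2)))
        (sne n4 (Or.inl (Ne.symm hy'.2.1.2))) (f3 _ m4)
  · intro Cl' W' hs' hz
    have hs2 := (Finset.subset_insert _ _).trans hs'
    refine end5 (y1 := y2) (y2 := y1) (y3 := y3) (y4 := y4) (b1 := b2) (b2 := b1) (b3 := b3)
      (b4 := b4) hd hC (hs.trans hs2) ?_ ?_ ?_ ?_ (hs2 h2) (hs2 h1) (hs2 h3) (hs' (by simp)) ?_ ?_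
    · rw [hX]; ext v; simp; tauto
    · rw [hF]; ext v; simp; tauto
    · simp; tauto
    · simp; tauto
    · intro h
      exact triv3 (hz _ h) (sne n4 (Or.inl (Ne.symm hy'.1.2.2)))
        (sne n4 (Or.inl (Ne.symm hy'.2.1.2))) f2
    · intro h
      exact triv3 (hz _ h) (sne n4 (Or.inl (Ne.symm hy'.1.2.2)))
        (sne n4 (Or.inl (Ne.symm hy'.2.1.2))) (f3 _ m4)

lemma end3 {win} {X F : Finset (Fin n)} {Cl0 Cl W}
    {y1 y2 y3 y4 b1 b2 b3 b4 : Fin n} (hd : Disjoint X F)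
    (hC : MCont win 0 (fun _ _ => True) X F Cl0) (hs : Cl0 ⊆ Cl)
    (hX : X = {y1, y2, y3, y4}) (hF : F = {b1, b2, b3, b4})
    (hy : [y1, y2, y3, y4].Nodup) (hb : [b1, b2, b3, b4].Nodup)
    (h1 : s(y1, b1) ∈ Cl) (h2 : s(y2, b2) ∈ Cl)
    (f3 : ∀ b ∈ F, s(y3, b) ∉ Cl ∪ W) (f4 : ∀ b ∈ F, s(y4, b) ∉ Cl ∪ W)
    (f : ∀ y ∈ X, s(y, b4) ∉ Cl ∪ W) :
    WaiterWins (Kedges n) 1 win 3 Cl W := by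
  have hne : ∀ x ∈ X, ∀ a ∈ F, x ≠ a := fun x hx a ha e => Finset.disjoint_left.1 hd hx (e ▸ ha)
  have m3 : y3 ∈ X := by simp [hX]
  have m4 : y4 ∈ X := by simp [hX]
  have c1 : b1 ∈ F := by simp [hF]
  have c2 : b2 ∈ F := by simp [hF]
  have c3 : b3 ∈ F := by simp [hF]
  have c4 : b4 ∈ F := by simp [hF]
  have n3 := hne _ m3 _ c3
  have n4 := hne _ m4 _ c3
  have hb' := hb
  have hy' := hy
  simp only [List.nodup_cons, List.mem_cons, List.not_mem_nil, or_false, not_or] at hb' hy'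
  have aux : ∀ y b, b ∈ F → y ∈ X → b ≠ b3 → s(y, b) ≠ s(y3, b3) ∧ s(y, b) ≠ s(y4, b3) := by
    intro y b hb hy hbb
    exact ⟨sne (hne y hy b3 c3) (Or.inr hbb), sne (hne y hy b3 c3) (Or.inr hbb)⟩
  apply offer s(y3, b3) s(y4, b3) (mem_K.2 n3) (mem_K.2 n4) (f3 _ c3) (f4 _ c3)
  · simp; tauto
  · intro Cl' W' hs' hz
    have hs2 := (Finset.subset_insert _ _).trans hs'
    refine end4 hd hC (hs.trans hs2) hX hF hy hb (hs2 h1) (hs2 h2) (hs' (by simp)) ?_ ?_ ?_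
    · intro h
      have au := aux y4 b1 c1 m4 (by tauto)
      exact triv3 (hz _ h) au.1 au.2 (f4 _ c1)
    · intro h
      have au := aux y4 b2 c2 m4 (by tauto)
      exact triv3 (hz _ h) au.1 au.2 (f4 _ c2)
    · intro y hyX h
      have au := aux y b4 c4 hyX (by tauto)
      exact triv3 (hz _ h) au.1 au.2 (f _ hyX)
  · intro Cl' W' hs' hz
    have hs2 := (Finset.subset_insert _ _).trans hs'
    refine end4 (y1 := y1) (y2 := y2) (y3 := y4) (y4 := y3) hd hC (hs.trans hs2) ?_ hF ?_ hb
      (hs2 h1) (hs2 h2) (hs' (by simp)) ?_ ?_ ?_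
    · rw [hX]; ext v; simp; tauto
    · simp; tauto
    · intro h
      have au := aux y3 b1 c1 m3 (by tauto)
      exact triv3 (hz _ h) au.1 au.2 (f3 _ c1)
    · intro h
      have au := aux y3 b2 c2 m3 (by tauto)
      exact triv3 (hz _ h) au.1 au.2 (f3 _ c2)
    · intro y hyX h
      have au := aux y b4 c4 hyX (by tauto)
      exact triv3 (hz _ h) au.1 au.2 (f _ hyX)

set_option maxHeartbeats 1000000 in
lemma end2 {win} {X F : Finset (Fin n)} {Cl0 Cl W}
    {y1 y2 y3 y4 b1 b2 b3 b4 : Fin n} (hd : Disjoint X F)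
    (hC : MCont win 0 (fun _ _ => True) X F Cl0) (hs : Cl0 ⊆ Cl)
    (hX : X = {y1, y2, y3, y4}) (hF : F = {b1, b2, b3, b4})
    (hy : [y1, y2, y3, y4].Nodup) (hb : [b1, b2, b3, b4].Nodup)
    (h1 : s(y1, b1) ∈ Cl)
    (f0 : ∀ y ∈ X, y ≠ y1 → ∀ b ∈ F, s(y, b) ∉ Cl ∪ W)
    (f : ∀ y ∈ X, s(y, b4) ∉ Cl ∪ W) :
    WaiterWins (Kedges n) 1 win 4 Cl W := by
  have hne : ∀ x ∈ X, ∀ a ∈ F, x ≠ a := fun x hx a ha e => Finset.disjoint_left.1 hd hx (e ▸ ha)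
  have m2 : y2 ∈ X := by simp [hX]
  have m3 : y3 ∈ X := by simp [hX]
  have m4 : y4 ∈ X := by simp [hX]
  have c2 : b2 ∈ F := by simp [hF]
  have c3 : b3 ∈ F := by simp [hF]
  have c4 : b4 ∈ F := by simp [hF]
  have hb' := hb
  have hy' := hy
  simp only [List.nodup_cons, List.mem_cons, List.not_mem_nil, or_false, not_or] at hb' hy'
  have e2 : y2 ≠ y1 := by tauto
  have e3 : y3 ≠ y1 := by tauto
  have e4 : y4 ≠ y1 := by tauto
  have aux : ∀ y b, b ∈ F → y ∈ X → (y ≠ y2 ∨ b = b4) →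
      s(y, b) ≠ s(y2, b2) ∧ s(y, b) ≠ s(y2, b3) := by
    intro y b hb hy hbb
    refine ⟨sne (hne y hy b2 c2) ?_, sne (hne y hy b3 c3) ?_⟩
    · rcases hbb with h | rfl
      · exact Or.inl h
      · exact Or.inr (Ne.symm hb'.2.1.2)
    · rcases hbb with h | rfl
      · exact Or.inl h
      · exact Or.inr (Ne.symm hb'.2.2.1)
  have fin : ∀ Cl' W' : Finset (Sym2 (Fin n)), (∀ z ∈ Cl' ∪ W', z = s(y2, b2) ∨ z = s(y2, b3) ∨ z ∈ Cl ∪ W) →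
      (∀ b ∈ F, s(y3, b) ∉ Cl' ∪ W') ∧ (∀ b ∈ F, s(y4, b) ∉ Cl' ∪ W') ∧
      ∀ y ∈ X, s(y, b4) ∉ Cl' ∪ W' := by
    intro Cl' W' hz
    refine ⟨fun b hbF h => ?_, fun b hbF h => ?_, fun y hyX h => ?_⟩
    · have au := aux y3 b hbF m3 (Or.inl (Ne.symm hy'.2.1.1))
      exact triv3 (hz _ h) au.1 au.2 (f0 _ m3 e3 b hbF)
    · have au := aux y4 b hbF m4 (Or.inl (Ne.symm hy'.2.1.2))
      exact triv3 (hz _ h) au.1 au.2 (f0 _ m4 e4 b hbF)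
    · have au := aux y b4 c4 hyX (Or.inr rfl)
      exact triv3 (hz _ h) au.1 au.2 (f _ hyX)
  apply offer s(y2, b2) s(y2, b3) (mem_K.2 (hne _ m2 _ c2)) (mem_K.2 (hne _ m2 _ c3))
    (f0 _ m2 e2 _ c2) (f0 _ m2 e2 _ c3)
  · have := hne _ m2 _ c3
    simp; tauto
  · intro Cl' W' hs' hz
    have hs2 := (Finset.subset_insert _ _).trans hs'
    obtain ⟨p, q, r⟩ := fin Cl' W' hz
    exact end3 hd hC (hs.trans hs2) hX hF hy hb (hs2 h1) (hs' (by simp)) p q r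
  · intro Cl' W' hs' hz
    have hs2 := (Finset.subset_insert _ _).trans hs'
    obtain ⟨p, q, r⟩ := fin Cl' W' hz
    refine end3 (b1 := b1) (b2 := b3) (b3 := b2) (b4 := b4) hd hC (hs.trans hs2) hX ?_ hy ?_
      (hs2 h1) (hs' (by simp)) p q r
    · rw [hF]; ext v; simp; tauto
    · simp; tauto

lemma end1 {win} (X F : Finset (Fin n)) (Cl W : Finset (Sym2 (Fin n))) (hd : Disjoint X F) (hX : X.card = 4)
    (hF : F.card = 4) (hc : Clean F (Cl ∪ W))
    (hC : MCont win 0 (fun _ _ => True) X F Cl) :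
    WaiterWins (Kedges n) 1 win 5 Cl W := by
  obtain ⟨y1, y2, y3, y4, a1, a2, a3, a4, a5, a6, hX⟩ := Finset.card_eq_four.1 hX
  obtain ⟨b1, b2, b3, b4, d1, d2, d3, d4, d5, d6, hF⟩ := Finset.card_eq_four.1 hF
  have hne : ∀ x ∈ X, ∀ a ∈ F, x ≠ a := fun x hx a ha e => Finset.disjoint_left.1 hd hx (e ▸ ha)
  have hcl : ∀ y, ∀ b ∈ F, s(y, b) ∉ Cl ∪ W := fun y b hb h => hc _ h b hb (by simp)
  have m1 : y1 ∈ X := by simp [hX]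
  have c1 : b1 ∈ F := by simp [hF]
  have c2 : b2 ∈ F := by simp [hF]
  have c4 : b4 ∈ F := by simp [hF]
  have hy : [y1, y2, y3, y4].Nodup := by simp; tauto
  have fin : ∀ Cl' W' : Finset (Sym2 (Fin n)), (∀ z ∈ Cl' ∪ W', z = s(y1, b1) ∨ z = s(y1, b2) ∨ z ∈ Cl ∪ W) →
      (∀ y ∈ X, y ≠ y1 → ∀ b ∈ F, s(y, b) ∉ Cl' ∪ W') ∧
      ∀ y ∈ X, s(y, b4) ∉ Cl' ∪ W' := by
    intro Cl' W' hz
    refine ⟨fun y hyX hy1 b hbF h => ?_, fun y hyX h => ?_⟩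
    · exact triv3 (hz _ h) (sne (hne y hyX b1 c1) (Or.inl hy1))
        (sne (hne y hyX b2 c2) (Or.inl hy1)) (hcl y b hbF)
    · exact triv3 (hz _ h) (sne (hne y hyX b1 c1) (Or.inr d3.symm))
        (sne (hne y hyX b2 c2) (Or.inr d5.symm)) (hcl y b4 c4)
  apply offer s(y1, b1) s(y1, b2) (mem_K.2 (hne _ m1 _ c1)) (mem_K.2 (hne _ m1 _ c2))
    (hcl _ _ c1) (hcl _ _ c2)
  · have := hne _ m1 _ c2
    simp; tauto
  · intro Cl' W' hs' hz
    have hs2 := (Finset.subset_insert _ _).trans hs'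
    obtain ⟨p, q⟩ := fin Cl' W' hz
    exact end2 hd hC hs2 hX hF hy (by simp; tauto) (hs' (by simp)) p q
  · intro Cl' W' hs' hz
    have hs2 := (Finset.subset_insert _ _).trans hs'
    obtain ⟨p, q⟩ := fin Cl' W' hz
    refine end2 (b1 := b2) (b2 := b1) (b3 := b3) (b4 := b4) hd hC hs2 hX ?_ hy ?_
      (hs' (by simp)) p q
    · rw [hF]; ext v; simp; tauto
    · simp; tauto

lemma last_stage {win} (X F : Finset (Fin n)) (Cl W : Finset (Sym2 (Fin n))) (hd : Disjoint X F) (hX : 6 ≤ X.card)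
    (hF : X.card = F.card) (hh : Hot F (Cl ∪ W))
    (hC : MCont win 0 (fun _ _ => True) X F Cl) :
    WaiterWins (Kedges n) 1 win (X.card + 1) Cl W := by
  have := hot_run (win := win) (t := 0) (Inv := fun _ _ => True) (s := 5) 4 (X.card - 4)
    4 (by omega) (by omega) (by omega) end1 X F Cl W hd (by omega) (by omega) hh hC
  convert this using 1; omega

structure St (m : ℕ) (par : ℕ → ℕ) (j : ℕ) (g : Fin m → ℕ → Fin n) (Fr : Finset (Fin n))
    (Cl : Finset (Sym2 (Fin n))) : Prop where
  inj : ∀ i c i' c', c < j → c' < j → g i c = g i' c' → i = i' ∧ c = c'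
  fr : ∀ v, v ∈ Fr ↔ ∀ i, ∀ c < j, g i c ≠ v
  edges : ∀ i c, 1 ≤ c → c < j → s(g i (par c), g i c) ∈ Cl

lemma St.ext {m : ℕ} {par : ℕ → ℕ} {j : ℕ} {g : Fin m → ℕ → Fin n} {Fr : Finset (Fin n)}
    {Cl Cl' : Finset (Sym2 (Fin n))} (h : St m par j g Fr Cl) (hs : Cl ⊆ Cl')
    (hpar : ∀ c, 1 ≤ c → c ≤ j → par c < c) (hj : 1 ≤ j) (f : Fin n → Fin n)
    (h1 : Set.InjOn f (Finset.univ.image (fun i => g i (par j)) : Finset (Fin n)))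
    (h2 : ∀ x ∈ Finset.univ.image (fun i => g i (par j)), f x ∈ Fr)
    (h3 : ∀ x ∈ Finset.univ.image (fun i => g i (par j)), s(x, f x) ∈ Cl') :
    St m par (j + 1) (fun i c => if c = j then f (g i (par j)) else g i c)
      (Fr \ (Finset.univ.image (fun i => g i (par j))).image f) Cl' := by
  have mem : ∀ i, g i (par j) ∈ Finset.univ.image (fun i => g i (par j)) := fun i => by simp
  have hpj := hpar j hj le_rfl
  refine ⟨?_, ?_, ?_⟩
  · intro i c i' c' hc hc' he
    by_cases e : c = j <;> by_cases e' : c' = j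
    · simp only [e, e', if_true] at he
      have := h1 (mem i) (mem i') he
      exact ⟨(h.inj _ _ _ _ hpj hpj this).1, by rw [e, e']⟩
    · simp only [e, e', if_true, if_false] at he
      exact absurd he.symm ((h.fr _).1 (h2 _ (mem i)) i' c' (by omega))
    · simp only [e, e', if_true, if_false] at he
      exact absurd he ((h.fr _).1 (h2 _ (mem i')) i c (by omega))
    · simp only [e, e', if_false] at he
      exact h.inj _ _ _ _ (by omega) (by omega) he
  · intro v
    rw [Finset.mem_sdiff, h.fr]
    constructor
    · rintro ⟨hv, hv'⟩ i c hc
      by_cases e : c = j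
      · simp only [e, if_true]
        intro hh
        exact hv' (Finset.mem_image.2 ⟨_, mem i, hh⟩)
      · simp only [e, if_false]
        exact hv i c (by omega)
    · intro hv
      refine ⟨fun i c hc => ?_, ?_⟩
      · have := hv i c (by omega)
        simpa [show c ≠ j by omega] using this
      · intro hh
        obtain ⟨x, hx, rfl⟩ := Finset.mem_image.1 hh
        obtain ⟨i, -, rfl⟩ := Finset.mem_image.1 hx
        exact hv i j (by omega) (by simp)
  · intro i c hc1 hc2
    have := hpar c hc1 (by omega)
    by_cases e : c = j
    · subst e
      simpa [this.ne] using h3 _ (mem i)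
    · simpa [e, show par c ≠ j by omega] using hs (h.edges i c hc1 (by omega))

lemma main_ind {k m : ℕ} (par : ℕ → ℕ) (hpar : ∀ c, 1 ≤ c → c < k → par c < c) (hm : 6 ≤ m)
    (win : Finset (Sym2 (Fin n)) → Finset (Sym2 (Fin n)) → Prop)
    (hwin : ∀ g Cl W, St m par k g ∅ Cl → win Cl W) :
    ∀ d j, 1 ≤ j → j + (d + 1) = k → ∀ g Fr Cl W, St m par j g Fr Cl →
      Fr.card = (d + 1) * m → Hot Fr (Cl ∪ W) →
      WaiterWins (Kedges n) 1 win ((d + 1) * m + 1) Cl W := by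
  intro d
  induction d with
  | zero =>
    intro j hj hk g Fr Cl W hS hc hh
    have hpj := hpar j hj (by omega)
    have hXc : (Finset.univ.image (fun i => g i (par j))).card = m := by
      rw [Finset.card_image_of_injective, Finset.card_univ, Fintype.card_fin]
      intro i i' h; exact (hS.inj _ _ _ _ hpj hpj h).1
    have hd : Disjoint (Finset.univ.image (fun i => g i (par j))) Fr := by
      rw [Finset.disjoint_left]
      intro x hx hx'
      obtain ⟨i, -, rfl⟩ := Finset.mem_image.1 hx
      exact (hS.fr _).1 hx' i _ hpj rfl
    have := last_stage (win := win) (Finset.univ.image (fun i => g i (par j))) Fr Cl W hd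
      (by omega) (by omega) hh ?_
    · rw [hXc] at this; simpa using this
    intro Cl' W' f h1 h2 h3 h4 _
    have S' := hS.ext h1 (fun c h h' => hpar c h (by omega)) hj f h2 h3 h4
    have hz : (Fr \ (Finset.univ.image (fun i => g i (par j))).image f) = ∅ := by
      rw [Finset.sdiff_eq_empty_iff_subset]
      refine (Finset.eq_of_subset_of_card_le (Finset.image_subset_iff.2 h3) ?_).ge
      rw [Finset.card_image_of_injOn h2]; omega
    rw [hz] at S'
    obtain rfl : j + 1 = k := by omega
    exact hwin _ _ _ S'
  | succ d ih =>
    intro j hj hk g Fr Cl W hS hc hh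
    have hpj := hpar j hj (by omega)
    have hXc : (Finset.univ.image (fun i => g i (par j))).card = m := by
      rw [Finset.card_image_of_injective, Finset.card_univ, Fintype.card_fin]
      intro i i' h; exact (hS.inj _ _ _ _ hpj hpj h).1
    have hd : Disjoint (Finset.univ.image (fun i => g i (par j))) Fr := by
      rw [Finset.disjoint_left]
      intro x hx hx'
      obtain ⟨i, -, rfl⟩ := Finset.mem_image.1 hx
      exact (hS.fr _).1 hx' i _ hpj rfl
    have := stage (win := win) (t := (d + 1) * m + 1)
      (Finset.univ.image (fun i => g i (par j))) Fr Cl W hd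
      (by omega) (by rw [hXc, hc]; nlinarith) hh ?_
    · rw [hXc] at this; convert this using 1; ring
    intro Cl' W' f h1 h2 h3 h4 hh'
    have S' := hS.ext h1 (fun c h h' => hpar c h (by omega)) hj f h2 h3 h4
    refine ih (j + 1) (by omega) (by omega) _ _ _ _ S' ?_ hh'
    rw [Finset.card_sdiff_of_subset (Finset.image_subset_iff.2 h3), Finset.card_image_of_injOn h2,
      hXc, hc, show (d + 1 + 1) * m = (d + 1) * m + m by ring]
    omega

lemma factor_card {k : ℕ} (T : SimpleGraph (Fin k)) (hT : T.IsTree) {A}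
    (hA : A ∈ factorFamily k n T.edgeSet) : (k - 1) * (n / k) ≤ A.card := by
  classical
  obtain ⟨g, hg, hA⟩ := hA
  have inj : ∀ i c i' c', g i c = g i' c' → i = i' ∧ c = c' := by
    intro i c i' c' h
    have := (hg (g i' c')).unique (y₁ := (i, c)) (y₂ := (i', c')) h rfl
    simpa using this
  have hc : T.edgeFinset.card = k - 1 := by
    have := hT.card_edgeFinset
    simp at this; omega
  have : ((Finset.univ : Finset (Fin (n / k))) ×ˢ T.edgeFinset).card ≤ A.card := by
    apply Finset.card_le_card_of_injOn (fun p => Sym2.map (g p.1) p.2)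
    · rintro ⟨i, e⟩ h
      simp only [Finset.coe_product, Set.mem_prod, Finset.mem_coe] at h
      rw [hA]
      exact Set.mem_iUnion.2 ⟨i, e, by simpa using h.2, rfl⟩
    · rintro ⟨i, e⟩ - ⟨i', e'⟩ - h
      induction e with | _ a b
      induction e' with | _ a' b'
      simp only [Sym2.map_mk, Sym2.eq_iff] at h
      rcases h with ⟨h1, h2⟩ | ⟨h1, h2⟩
      · obtain ⟨rfl, rfl⟩ := inj _ _ _ _ h1
        obtain ⟨-, rfl⟩ := inj _ _ _ _ h2
        rfl
      · obtain ⟨rfl, rfl⟩ := inj _ _ _ _ h1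
        obtain ⟨-, rfl⟩ := inj _ _ _ _ h2
        rw [Sym2.eq_swap]
  rw [Finset.card_product, hc] at this
  simpa [mul_comm] using this

lemma upper {k m : ℕ} (hk : 2 ≤ k) (hm : 6 ≤ m) (T : SimpleGraph (Fin k)) (hT : T.IsTree)
    (hn : n = k * m) :
    WaiterWins (Kedges n) 1 (fun Cl _ => ∃ A ∈ factorFamily k n T.edgeSet, A ⊆ Cl)
      ((k - 1) * m + 1) ∅ ∅ := by
  classical
  obtain ⟨f, par, hsur, hinj, hpar, hadj⟩ := tree_order (k - 1) (Fin k) T hT (by simp; omega)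
  rw [show k - 1 + 1 = k by omega] at *
  have hnm : n / k = m := by rw [hn]; exact Nat.mul_div_cancel_left _ (by omega)
  have hmn : m ≤ n := by rw [hn]; nlinarith
  have := main_ind (n := n) (k := k) (m := m) par hpar hm
    (fun Cl _ => ∃ A ∈ factorFamily k n T.edgeSet, A ⊆ Cl) ?_ (k - 2) 1 le_rfl (by omega)
    (fun i _ => Fin.castLE hmn i) (Finset.univ \ Finset.univ.image (Fin.castLE hmn)) ∅ ∅ ?_ ?_ ?_
  · rwa [show k - 2 + 1 = k - 1 by omega] at this
  · intro g Cl W hS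
    subst hnm
    choose ix hix hfix using hsur
    let G : Fin (n / k) → Fin k → Fin n := fun i v => g i (ix v)
    have hG : ∀ u v, T.Adj u v → ∀ i, s(G i u, G i v) ∈ Cl := by
      intro u v huv i
      obtain ⟨c, hc1, hc2, e⟩ := hadj u v huv
      have hI : ∀ c < k, ix (f c) = c := fun c hc => hinj _ _ (hix _) hc (hfix _)
      have e' := congrArg (Sym2.map (G i)) e
      simp only [Sym2.map_mk] at e'
      rw [e', Sym2.eq_swap]
      simp only [G]
      rw [hI c hc2, hI _ ((hpar c hc1 hc2).trans hc2)]
      exact hS.edges i c hc1 hc2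
    refine ⟨(⋃ i, Sym2.map (G i) '' T.edgeSet).toFinset, ⟨G, ?_, by simp⟩, ?_⟩
    · intro v
      have hv : ¬ ∀ i, ∀ c < k, g i c ≠ v := by rw [← hS.fr v]; simp
      push Not at hv
      obtain ⟨i, c, hc, hv⟩ := hv
      have hI : ix (f c) = c := hinj _ _ (hix _) hc (hfix _)
      refine ⟨(i, f c), by simp [G, hI, hv], ?_⟩
      rintro ⟨i', v'⟩ h
      simp only [G] at h
      obtain ⟨rfl, rfl⟩ := hS.inj _ _ _ _ (hix _) hc (h.trans hv.symm)
      rw [hfix]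
    · intro e he
      simp only [Set.mem_toFinset, Set.mem_iUnion, Set.mem_image] at he
      obtain ⟨i, e, he, rfl⟩ := he
      induction e with | _ a b
      exact hG a b he i
  · refine ⟨?_, ?_, ?_⟩
    · intro i c i' c' hc hc' h
      exact ⟨by simpa using h, by omega⟩
    · intro v
      simp only [Finset.mem_sdiff, Finset.mem_univ, true_and, Finset.mem_image, not_exists]
      constructor
      · intro h i c _; exact h i
      · intro h i; exact h i 0 (by omega)
    · intros; omega
  · rw [Finset.card_sdiff_of_subset (Finset.subset_univ _),
      Finset.card_image_of_injective _ (Fin.castLE_injective hmn)]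
    simp only [Finset.card_univ, Fintype.card_fin]
    obtain ⟨k, rfl⟩ : ∃ k', k = k' + 2 := ⟨k - 2, by omega⟩
    rw [hn]
    simp only [Nat.add_sub_cancel]
    rw [show (k + 2) * m = (k + 1) * m + m by ring]; omega
  · have hlt : m < n := by rw [hn]; nlinarith
    refine ⟨⟨m, hlt⟩, ?_, ⟨0, by omega⟩, ?_, by simp⟩
    · simp [Fin.ext_iff]
      intro x; have := x.2; omega
    · simp [Fin.ext_iff]
      exact ⟨⟨0, by omega⟩, rfl⟩

end helpers

/-- For every `k ≥ 2`, every tree `T` on `k` vertices, and every large enough `n` divisible by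
`k`, in the unbiased Waiter-Client game on `K_n` whose winning sets are the `T`-factors of
`K_n`, we have `((k−1)/k)·n ≤ τ_WC(F_{n,T-fac}, 1) ≤ ((k−1)/k)·n + 1`. -/
theorem WC_tree_factor :
    ∀ k : ℕ, 2 ≤ k → ∀ T : SimpleGraph (Fin k), T.IsTree →
      ∃ n₀ : ℕ, ∀ n : ℕ, n₀ ≤ n → k ∣ n →
        (k - 1) * (n / k) ≤ tauWC (Kedges n) (factorFamily k n T.edgeSet) 1 ∧
        tauWC (Kedges n) (factorFamily k n T.edgeSet) 1 ≤ (k - 1) * (n / k) + 1 := by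
  intro k hk T hT
  refine ⟨6 * k, fun n hn hkn => ?_⟩
  obtain ⟨m, rfl⟩ := hkn
  have hm : 6 ≤ m := by
    by_contra h
    have : k * m ≤ k * 5 := Nat.mul_le_mul_left k (by omega)
    omega
  have hdiv : k * m / k = m := Nat.mul_div_cancel_left _ (by omega)
  have hup := upper (n := k * m) hk hm T hT rfl
  constructor
  · have hmem : tauWC (Kedges (k * m)) (factorFamily k (k * m) T.edgeSet) 1 ∈ {t | WaiterWins
        (Kedges (k * m)) 1 (fun Cl _ => ∃ A ∈ factorFamily k (k * m) T.edgeSet, A ⊆ Cl) t ∅ ∅} :=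
      Nat.sInf_mem ⟨(k - 1) * m + 1, hup⟩
    obtain ⟨A, hA, hc⟩ := wins_card _ _ _ hmem
    have := factor_card T hT hA
    simp only [Finset.card_empty, zero_add] at hc
    exact this.trans hc
  · rw [hdiv]
    exact Nat.sInf_le hup
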